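/- arXiv:2601.10864 — 2 statements merged into one kernel-verified Lean document; each statement's English description precedes it below -/
import Mathlib

section
/- The maximum likelihood threshold of the four-cycle C_4 (the cycle graph on 4 vertices) equals 3. -/
open MeasureTheory Matrix

noncomputable section

/-- The objective function `K ↦ tr(S K) − log det K` of Gaussian maximum likelihood,
where `S` is the sample covariance matrix. -/
def mlObjective {n : ℕ} (S K : Matrix (Fin n) (Fin n) ℝ) : ℝ :=
  (S * K).trace - Real.log K.det

/-- The maximum likelihood threshold of a set `M` of positive definite matrices:
the smallest positive integer `d` such that for Lebesgue-almost every real `n × d`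
matrix `X`, the function `K ↦ tr(X Xᵀ K) − log det K` attains a minimum on `M`. -/
def mlt (n : ℕ) (M : Set (Matrix (Fin n) (Fin n) ℝ)) : ℕ :=
  sInf {d : ℕ | 0 < d ∧
    ∀ᵐ X : Fin n → Fin d → ℝ ∂volume,
      ∃ K ∈ M, ∀ K' ∈ M,
        mlObjective (Matrix.of X * (Matrix.of X)ᵀ) K ≤
          mlObjective (Matrix.of X * (Matrix.of X)ᵀ) K'}

/-- The Gaussian graphical model of a graph `G` on `{1,…,n}`: all symmetric positive
definite matrices whose off-diagonal entries vanish at non-edges of `G`. -/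
def graphModel (n : ℕ) (G : SimpleGraph (Fin n)) : Set (Matrix (Fin n) (Fin n) ℝ) :=
  {K | K.PosDef ∧ ∀ i j, i ≠ j → ¬ G.Adj i j → K i j = 0}

/-!
The maximum likelihood estimate for a sample `X` exists if and only if no nonzero positive
semidefinite `K` supported on the graph satisfies `Xᵀ * K = 0`: adding such a `K` decreases the
objective forever, while without one `tr(X Xᵀ K)` dominates a multiple of `tr K`, which beats
`log det K`.

A column of `K` is a linear relation among the rows of `X` indexed by a closed neighbourhood. In a
cycle these are three rows, so for `d = 3` generic rows force `K = 0`. For `d = 1` an edge already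
carries a relation, whose rank one matrix is an obstruction. For `d = 2` triangulate the cycle by
the diagonals at one vertex. The relation among the three rows at a triangle gives a rank one
matrix, which can be scaled so that the two triangles at a diagonal contribute opposite entries
there. If the rows of `X` are in counterclockwise order, an open condition, all scaling factors are
positive, so the sum is a nonzero obstruction supported on the cycle.
-/

section PosSemidefTrace

open scoped ComplexOrder MatrixOrder

variable {ι 𝕜 : Type*} [Fintype ι] [RCLike 𝕜] {A B : Matrix ι ι 𝕜}

theorem trace_mul_nonneg_of_posSemidef (hA : A.PosSemidef) (hB : B.PosSemidef) :
    0 ≤ (A * B).trace := by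
  classical
  obtain ⟨C, rfl⟩ := CStarAlgebra.nonneg_iff_eq_star_mul_self.mp hA.nonneg
  rw [star_eq_conjTranspose, Matrix.mul_assoc, trace_mul_comm]
  exact (hB.mul_mul_conjTranspose_same C).trace_nonneg

theorem trace_mul_eq_zero_iff_of_posSemidef (hA : A.PosSemidef) (hB : B.PosSemidef) :
    (A * B).trace = 0 ↔ A * B = 0 := by
  classical
  refine ⟨fun h ↦ ?_, fun h ↦ by rw [h, trace_zero]⟩
  obtain ⟨C, rfl⟩ := CStarAlgebra.nonneg_iff_eq_star_mul_self.mp hA.nonneg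
  obtain ⟨D, rfl⟩ := CStarAlgebra.nonneg_iff_eq_star_mul_self.mp hB.nonneg
  simp only [star_eq_conjTranspose] at h ⊢
  have hCD : C * Dᴴ = 0 := by
    rw [← trace_mul_conjTranspose_self_eq_zero_iff, conjTranspose_mul, conjTranspose_conjTranspose,
      ← h, trace_mul_comm (Cᴴ * C)]
    simp only [Matrix.mul_assoc, trace_mul_comm C]
  rw [Matrix.mul_assoc, ← Matrix.mul_assoc C, hCD, Matrix.zero_mul, Matrix.mul_zero]

theorem trace_mul_pos_of_posDef (hA : A.PosDef) (hB : B.PosSemidef) (hB₀ : B ≠ 0) :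
    0 < (A * B).trace := by
  classical
  refine (trace_mul_nonneg_of_posSemidef hA.posSemidef hB).lt_of_ne' fun h ↦ hB₀ ?_
  rw [trace_mul_eq_zero_iff_of_posSemidef hA.posSemidef hB] at h
  exact hA.isUnit.mul_right_eq_zero.mp h

end PosSemidefTrace

section PosSemidefCone

theorem isClosed_setOf_posSemidef {ι : Type*} [Finite ι] :
    IsClosed {K : Matrix ι ι ℝ | K.PosSemidef} := by
  have := Fintype.ofFinite ι
  simp only [posSemidef_iff_dotProduct_mulVec, IsHermitian, Set.ofPred_and, Set.ofPred_forall]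
  exact (isClosed_eq (by fun_prop) (by fun_prop)).inter
    (isClosed_iInter fun x ↦ isClosed_le (by fun_prop) (by fun_prop))

variable {ι : Type*} [Fintype ι]

theorem abs_apply_le_trace_of_posSemidef {K : Matrix ι ι ℝ} (hK : K.PosSemidef) (i j : ι) :
    |K i j| ≤ K.trace := by
  classical
  have diag_le : ∀ i, K i i ≤ K.trace := fun i ↦
    Finset.single_le_sum (f := fun i ↦ K i i) (fun i _ ↦ hK.diag_nonneg) (Finset.mem_univ i)
  have symm : K j i = K i j := by simpa using hK.isHermitian.apply i j
  have add_form : 0 ≤ K i i + K j j + 2 * K i j := by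
    have := hK.dotProduct_mulVec_nonneg (Pi.single i 1 + Pi.single j 1)
    simp only [star_trivial, mulVec_add, mulVec_single_one, add_dotProduct, dotProduct_add,
      single_one_dotProduct, col_apply, symm] at this
    linarith
  have sub_form : 0 ≤ K i i + K j j - 2 * K i j := by
    have := hK.dotProduct_mulVec_nonneg (Pi.single i 1 - Pi.single j 1)
    simp only [star_trivial, mulVec_sub, mulVec_single_one, sub_dotProduct, dotProduct_sub,
      single_one_dotProduct, col_apply, symm] at this
    linarith
  rw [abs_le]
  constructor <;> linarith [diag_le i, diag_le j]

theorem isCompact_setOf_posSemidef_trace_le (T : ℝ) :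
    IsCompact {K : Matrix ι ι ℝ | K.PosSemidef ∧ K.trace ≤ T} := by
  have box : IsCompact (Set.univ.pi fun _ : ι ↦ Set.univ.pi fun _ : ι ↦ Set.Icc (-T) T) :=
    isCompact_univ_pi fun _ ↦ isCompact_univ_pi fun _ ↦ isCompact_Icc
  refine box.of_isClosed_subset
    (isClosed_setOf_posSemidef.inter (isClosed_le continuous_id.matrix_trace continuous_const)) ?_
  rintro K ⟨hK, hT⟩ i _ j _
  exact abs_le.mp ((abs_apply_le_trace_of_posSemidef hK i j).trans hT)

end PosSemidefCone

section LogDet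

variable {ι : Type*} [Fintype ι] [DecidableEq ι] {A B : Matrix ι ι ℝ}

theorem log_det_le_trace_sub_card (hA : A.PosDef) :
    Real.log A.det ≤ A.trace - Fintype.card ι := by
  have det_eq : A.det = ∏ i, hA.1.eigenvalues i := by simpa using hA.1.det_eq_prod_eigenvalues
  have trace_eq : A.trace = ∑ i, hA.1.eigenvalues i := by simpa using hA.1.trace_eq_sum_eigenvalues
  calc Real.log A.det = ∑ i, Real.log (hA.1.eigenvalues i) := by
        rw [det_eq, Real.log_prod fun i _ ↦ (hA.eigenvalues_pos i).ne']
    _ ≤ ∑ i, (hA.1.eigenvalues i - 1) :=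
        Finset.sum_le_sum fun i _ ↦ Real.log_le_sub_one_of_pos (hA.eigenvalues_pos i)
    _ = A.trace - Fintype.card ι := by simp [trace_eq]

open scoped MatrixOrder in
/-- The right-hand side is the tangent of the concave function `log det` at `A`, since
`tr(A⁻¹ B) - n = tr(A⁻¹ (B - A))`. -/
theorem log_det_le_log_det_add_trace_inv_mul (hA : A.PosDef) (hB : B.PosDef) :
    Real.log B.det ≤ Real.log A.det + ((A⁻¹ * B).trace - Fintype.card ι) := by
  obtain ⟨C, hC, hAC⟩ := CStarAlgebra.isStrictlyPositive_iff_eq_star_mul_self.mp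
    hA.inv.isStrictlyPositive
  rw [star_eq_conjTranspose] at hAC
  have hM : (C * B * Cᴴ).PosDef := hB.mul_mul_conjTranspose_same (vecMul_injective_of_isUnit hC)
  have trace_eq : (C * B * Cᴴ).trace = (A⁻¹ * B).trace := by
    rw [hAC, Matrix.mul_assoc, trace_mul_comm, Matrix.mul_assoc, trace_mul_comm, Matrix.mul_assoc]
  have det_eq : (C * B * Cᴴ).det = (A⁻¹).det * B.det := by
    rw [hAC, det_mul, det_mul, det_mul]
    ring
  have h := log_det_le_trace_sub_card hM
  rw [trace_eq, det_eq, det_nonsing_inv, Ring.inverse_eq_inv',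
    Real.log_mul (inv_ne_zero hA.det_pos.ne') hB.det_pos.ne', Real.log_inv] at h
  linarith

theorem log_det_lt_log_det_add (hA : A.PosDef) (hB : B.PosSemidef) (hB₀ : B ≠ 0) :
    Real.log A.det < Real.log (A + B).det := by
  have hAB : (A + B).PosDef := hA.add_posSemidef hB
  have trace_eq : ((A + B)⁻¹ * A).trace = Fintype.card ι - ((A + B)⁻¹ * B).trace := by
    rw [eq_sub_iff_add_eq, ← trace_add, ← Matrix.mul_add,
      nonsing_inv_mul _ hAB.det_pos.ne'.isUnit, trace_one]
  linarith [log_det_le_log_det_add_trace_inv_mul hAB hA, trace_mul_pos_of_posDef hAB.inv hB hB₀]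

theorem log_det_le_mul_trace_sub {ε : ℝ} (hε : 0 < ε) (hA : A.PosDef) :
    Real.log A.det ≤ ε * A.trace - Fintype.card ι * (1 + Real.log ε) := by
  have h := log_det_le_trace_sub_card (hA.smul hε)
  rw [det_smul, Real.log_mul (by positivity) hA.det_pos.ne', Real.log_pow, trace_smul,
    smul_eq_mul] at h
  linarith

end LogDet

section Existence

/-- The maximum likelihood estimate exists: the objective `mlObjective S` attains a minimum
on `M`. -/
def MLEExists {n : ℕ} (S : Matrix (Fin n) (Fin n) ℝ) (M : Set (Matrix (Fin n) (Fin n) ℝ)) : Prop :=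
  ∃ K ∈ M, ∀ K' ∈ M, mlObjective S K ≤ mlObjective S K'

/-- The closure of `graphModel n G`, a closed convex cone: positive semidefinite replaces positive
definite. Its elements `K` with `S * K = 0` are the obstructions to the existence of the maximum
likelihood estimate. -/
def psdGraphModel (n : ℕ) (G : SimpleGraph (Fin n)) : Set (Matrix (Fin n) (Fin n) ℝ) :=
  {K | K.PosSemidef ∧ ∀ i j, i ≠ j → ¬ G.Adj i j → K i j = 0}

variable {n : ℕ} {G : SimpleGraph (Fin n)} {S K : Matrix (Fin n) (Fin n) ℝ}

theorem graphModel_subset_psdGraphModel : graphModel n G ⊆ psdGraphModel n G :=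
  fun _ hK ↦ ⟨hK.1.posSemidef, hK.2⟩

theorem one_mem_graphModel : 1 ∈ graphModel n G :=
  ⟨.one, fun _ _ hij _ ↦ one_apply_ne hij⟩

theorem add_mem_graphModel {P : Matrix (Fin n) (Fin n) ℝ} (hK : K ∈ graphModel n G)
    (hP : P ∈ psdGraphModel n G) : K + P ∈ graphModel n G :=
  ⟨hK.1.add_posSemidef hP.1, fun i j hij hadj ↦ by
    rw [Matrix.add_apply, hK.2 i j hij hadj, hP.2 i j hij hadj, add_zero]⟩

theorem smul_mem_psdGraphModel {t : ℝ} (ht : 0 ≤ t) (hK : K ∈ psdGraphModel n G) :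
    t • K ∈ psdGraphModel n G :=
  ⟨hK.1.smul ht, fun i j hij hadj ↦ by rw [Matrix.smul_apply, hK.2 i j hij hadj, smul_zero]⟩

theorem isClosed_psdGraphModel : IsClosed (psdGraphModel n G) := by
  have support_closed :
      IsClosed {K : Matrix (Fin n) (Fin n) ℝ | ∀ i j, i ≠ j → ¬ G.Adj i j → K i j = 0} := by
    simp only [Set.ofPred_forall]
    exact isClosed_iInter fun i ↦ isClosed_iInter fun j ↦ isClosed_iInter fun _ ↦
      isClosed_iInter fun _ ↦ isClosed_eq (continuous_id.matrix_elem i j) continuous_const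
  exact isClosed_setOf_posSemidef.inter support_closed

theorem isCompact_psdGraphModel_trace_le (T : ℝ) :
    IsCompact {K ∈ psdGraphModel n G | K.trace ≤ T} :=
  (isCompact_setOf_posSemidef_trace_le T).of_isClosed_subset
    (isClosed_psdGraphModel.inter (isClosed_le continuous_id.matrix_trace continuous_const))
    fun _ hK ↦ ⟨hK.1.1, hK.2⟩

theorem exists_pos_mul_trace_le_trace_mul (hS : S.PosSemidef)
    (h : ∀ K ∈ psdGraphModel n G, S * K = 0 → K = 0) :
    ∃ c > 0, ∀ K ∈ psdGraphModel n G, c * K.trace ≤ (S * K).trace := by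
  have compact : IsCompact ({K ∈ psdGraphModel n G | K.trace ≤ 1} ∩ {K | K.trace = 1}) :=
    (isCompact_psdGraphModel_trace_le 1).inter_right
      (isClosed_eq continuous_id.matrix_trace continuous_const)
  obtain ⟨c, hc, hmin⟩ := compact.exists_forall_le' (f := fun K ↦ (S * K).trace)
    (Continuous.continuousOn (by fun_prop)) (a := 0) <| by
      rintro K ⟨⟨hK, -⟩, hK₁ : K.trace = 1⟩
      refine (trace_mul_nonneg_of_posSemidef hS hK.1).lt_of_ne' fun h₀ ↦ ?_
      rw [trace_mul_eq_zero_iff_of_posSemidef hS hK.1] at h₀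
      rw [h K hK h₀, trace_zero] at hK₁
      exact zero_ne_one hK₁
  refine ⟨c, hc, fun K hK ↦ ?_⟩
  rcases hK.1.trace_nonneg.eq_or_lt with htr | htr
  · rw [← htr, mul_zero]
    exact trace_mul_nonneg_of_posSemidef hS hK.1
  · have trace_eq : (K.trace⁻¹ • K).trace = 1 := by simp [htr.ne']
    have := hmin (K.trace⁻¹ • K)
      ⟨⟨smul_mem_psdGraphModel (inv_nonneg.mpr htr.le) hK, trace_eq.le⟩, trace_eq⟩
    rwa [Matrix.mul_smul, trace_smul, smul_eq_mul, inv_mul_eq_div, le_div_iff₀ htr] at this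

/-- The part of the cone `psdGraphModel n G` with trace at most `T` and determinant at least `δ`.
For `0 < δ` it is a compact subset of `graphModel n G`, and it serves to confine the sublevel
sets of the objective. -/
def truncatedGraphModel (G : SimpleGraph (Fin n)) (T δ : ℝ) : Set (Matrix (Fin n) (Fin n) ℝ) :=
  {K ∈ psdGraphModel n G | K.trace ≤ T ∧ δ ≤ K.det}

theorem isCompact_truncatedGraphModel (T δ : ℝ) : IsCompact (truncatedGraphModel G T δ) := by
  have hdet : IsClosed {K : Matrix (Fin n) (Fin n) ℝ | δ ≤ K.det} :=
    isClosed_le continuous_const continuous_id.matrix_det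
  convert! (isCompact_psdGraphModel_trace_le (G := G) T).inter_right hdet using 1
  ext K
  exact and_assoc.symm

theorem truncatedGraphModel_subset_graphModel (T : ℝ) {δ : ℝ} (hδ : 0 < δ) :
    truncatedGraphModel G T δ ⊆ graphModel n G := fun _ hK ↦
  ⟨hK.1.1.posDef_iff_det_ne_zero.mpr (hδ.trans_le hK.2.2).ne', hK.1.2⟩

theorem continuousOn_mlObjective_graphModel : ContinuousOn (mlObjective S) (graphModel n G) :=
  ContinuousOn.sub (Continuous.continuousOn (by fun_prop))
    (ContinuousOn.log continuous_id.matrix_det.continuousOn fun _ hK ↦ hK.1.det_pos.ne')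

theorem exists_truncatedGraphModel_of_mlObjective_le (hS : S.PosSemidef)
    (h : ∀ K ∈ psdGraphModel n G, S * K = 0 → K = 0) (b : ℝ) :
    ∃ T, ∃ δ > 0, ∀ K ∈ graphModel n G, mlObjective S K ≤ b → K ∈ truncatedGraphModel G T δ := by
  obtain ⟨c, hc, hcoercive⟩ := exists_pos_mul_trace_le_trace_mul hS h
  refine ⟨(b - n * (1 + Real.log (c / 2))) / (c / 2), Real.exp (-b), Real.exp_pos _,
    fun K hK hb ↦ ⟨graphModel_subset_psdGraphModel hK, ?_, ?_⟩⟩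
  · have log_le := log_det_le_mul_trace_sub (half_pos hc) hK.1
    have le_trace := hcoercive K (graphModel_subset_psdGraphModel hK)
    rw [mlObjective] at hb
    rw [Fintype.card_fin] at log_le
    rw [le_div_iff₀ (half_pos hc)]
    linarith
  · have trace_nonneg := trace_mul_nonneg_of_posSemidef hS hK.1.posSemidef
    rw [mlObjective] at hb
    rw [← Real.le_log_iff_exp_le hK.1.det_pos]
    linarith

theorem mleExists_graphModel_iff (hS : S.PosSemidef) :
    MLEExists S (graphModel n G) ↔ ∀ K ∈ psdGraphModel n G, S * K = 0 → K = 0 := by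
  constructor
  · rintro ⟨K, hK, hmin⟩ P hP hSP
    by_contra hP₀
    have hle := hmin (K + P) (add_mem_graphModel hK hP)
    have hlt := log_det_lt_log_det_add hK.1 hP.1 hP₀
    rw [mlObjective, mlObjective, Matrix.mul_add, hSP, add_zero] at hle
    linarith
  · intro h
    obtain ⟨T, δ, hδ, hsub⟩ :=
      exists_truncatedGraphModel_of_mlObjective_le hS h (mlObjective S 1)
    have one_mem := hsub 1 one_mem_graphModel le_rfl
    obtain ⟨K, hK, hmin⟩ := (isCompact_truncatedGraphModel T δ).exists_isMinOn ⟨1, one_mem⟩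
      (continuousOn_mlObjective_graphModel.mono (truncatedGraphModel_subset_graphModel T hδ))
    refine ⟨K, truncatedGraphModel_subset_graphModel T hδ hK, fun K' hK' ↦ ?_⟩
    rcases le_or_gt (mlObjective S K') (mlObjective S 1) with hle | hlt
    · exact hmin (hsub K' hK' hle)
    · exact (hmin one_mem).trans hlt.le

theorem mleExists_self_mul_transpose_iff {d : ℕ} (X : Matrix (Fin n) (Fin d) ℝ) :
    MLEExists (X * Xᵀ) (graphModel n G) ↔ ∀ K ∈ psdGraphModel n G, Xᵀ * K = 0 → K = 0 := by
  simp only [← conjTranspose_eq_transpose_of_trivial,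
    mleExists_graphModel_iff (posSemidef_self_mul_conjTranspose X),
    self_mul_conjTranspose_mul_eq_zero]

end Existence

section Genericity

theorem isOpen_setOf_det_ne_zero {ι : Type*} [Fintype ι] [DecidableEq ι] :
    IsOpen {A : ι → ι → ℝ | (Matrix.of A).det ≠ 0} :=
  isOpen_ne_fun (Continuous.matrix_det (A := fun A : ι → ι → ℝ ↦ Matrix.of A) continuous_id)
    continuous_const

theorem ae_det_ne_zero {ι : Type*} [Fintype ι] [DecidableEq ι] :
    ∀ᵐ A : ι → ι → ℝ, (Matrix.of A).det ≠ 0 := by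
  -- On the line `A + t • 1` the determinant is the characteristic polynomial of `-A`.
  refine ae_mem_of_ae_add_linearMap_mem (LinearMap.toSpanSingleton ℝ (ι → ι → ℝ) (1 : Matrix ι ι ℝ))
    volume volume isOpen_setOf_det_ne_zero.measurableSet fun A ↦ ?_
  have roots_finite : {t : ℝ | (-Matrix.of A).charpoly.IsRoot t}.Finite :=
    Polynomial.finite_setOfPred_isRoot (charpoly_monic _).ne_zero
  filter_upwards [roots_finite.countable.ae_notMem volume] with t ht
  have det_eq : (Matrix.of A + t • (1 : Matrix ι ι ℝ)).det = (-Matrix.of A).charpoly.eval t := by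
    rw [eval_charpoly, scalar_apply, ← smul_one_eq_diagonal, sub_neg_eq_add, add_comm]
  change (Matrix.of A + t • (1 : Matrix ι ι ℝ)).det ≠ 0
  rwa [det_eq]

theorem ae_linearIndepOn_of_card_le {ι κ : Type*} [Fintype ι] [Fintype κ] {s : Finset ι}
    (hs : s.card ≤ Fintype.card κ) : ∀ᵐ X : ι → κ → ℝ, LinearIndepOn ℝ X (s : Set ι) := by
  classical
  obtain ⟨e⟩ : Nonempty (s ↪ κ) := Function.Embedding.nonempty_of_card_le (by simpa using hs)
  let minor : (ι → κ → ℝ) →ₗ[ℝ] (s → s → ℝ) :=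
    LinearMap.pi fun i ↦ LinearMap.funLeft ℝ ℝ e ∘ₗ LinearMap.proj i.1
  have minor_surjective : Function.Surjective minor := fun A ↦
    ⟨Function.extend Subtype.val (fun i ↦ Function.extend e (A i) 0) 0, by
      ext i j
      simp [minor, LinearMap.funLeft_apply, e.injective.extend_apply]⟩
  filter_upwards [(ae_comp_linearMap_mem_iff minor volume volume minor_surjective
    isOpen_setOf_det_ne_zero.measurableSet).mpr ae_det_ne_zero] with X hX
  exact (linearIndependent_rows_of_det_ne_zero hX).of_comp (LinearMap.funLeft ℝ ℝ e)

theorem not_ae_of_isOpen {E : Type*} [TopologicalSpace E] [MeasurableSpace E] {μ : Measure E}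
    [μ.IsOpenPosMeasure] {p : E → Prop} {U : Set E} (hU : IsOpen U) (hne : U.Nonempty)
    (h : ∀ x ∈ U, ¬ p x) : ¬ ∀ᵐ x ∂μ, p x := fun hp ↦
  (hU.measure_pos μ hne).ne' (measure_mono_null h (ae_iff.mp hp))

end Genericity

section GenericExistence

/-- For almost every sample of size `d` the maximum likelihood estimate exists; the threshold
`mlt n M` is the least positive such `d`. -/
def GenericMLEExists {n : ℕ} (d : ℕ) (M : Set (Matrix (Fin n) (Fin n) ℝ)) : Prop :=
  ∀ᵐ X : Fin n → Fin d → ℝ, MLEExists (Matrix.of X * (Matrix.of X)ᵀ) M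

variable {n d : ℕ} {G : SimpleGraph (Fin n)}

theorem mleExists_of_linearIndepOn_closedNeighborhood {X : Fin n → Fin d → ℝ}
    (hX : ∀ i, LinearIndepOn ℝ X (insert i (G.neighborSet i))) :
    MLEExists (Matrix.of X * (Matrix.of X)ᵀ) (graphModel n G) := by
  rw [mleExists_self_mul_transpose_iff]
  intro K hK hXK
  ext i j
  classical
  let N : Finset (Fin n) := insert j (G.neighborFinset j)
  have outside : ∀ k ∉ N, K k j = 0 := fun k hk ↦ by
    simp only [N, Finset.mem_insert, SimpleGraph.mem_neighborFinset, not_or] at hk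
    exact hK.2 k j hk.1 fun h ↦ hk.2 h.symm
  have relation : ∑ k ∈ N, K k j • X k = 0 := by
    rw [Finset.sum_subset N.subset_univ fun k _ hk ↦ by rw [outside k hk, zero_smul]]
    ext l
    simpa [mul_apply, mul_comm] using congrFun₂ hXK l j
  by_cases hi : i ∈ N
  · exact linearIndepOn_finset_iff.mp (by simpa [N] using hX j) _ relation i hi
  · exact outside i hi

theorem genericMLEExists_graphModel_of_maxDegree_lt [DecidableRel G.Adj] (hd : G.maxDegree < d) :
    GenericMLEExists d (graphModel n G) := by
  have generic : ∀ᵐ X : Fin n → Fin d → ℝ, ∀ i,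
      LinearIndepOn ℝ X (insert i (G.neighborFinset i) : Finset (Fin n)) :=
    ae_all_iff.mpr fun i ↦ ae_linearIndepOn_of_card_le <| by
      rw [Finset.card_insert_of_notMem (G.notMem_neighborFinset_self i),
        G.card_neighborFinset_eq_degree, Fintype.card_fin]
      exact (G.degree_le_maxDegree i).trans_lt hd
  filter_upwards [generic] with X hX
  exact mleExists_of_linearIndepOn_closedNeighborhood fun i ↦ by simpa using hX i

theorem not_mleExists_of_isClique {s : Finset (Fin n)} (hs : G.IsClique s) (hd : d < s.card)
    (X : Fin n → Fin d → ℝ) : ¬ MLEExists (Matrix.of X * (Matrix.of X)ᵀ) (graphModel n G) := by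
  have dependent : ¬ LinearIndepOn ℝ X (s : Set (Fin n)) := fun h ↦
    hd.not_ge <| by simpa using h.fintype_card_le_finrank
  obtain ⟨f, hf, i, hi, hfi⟩ := not_linearIndepOn_finset_iff.mp dependent
  let v : Fin n → ℝ := fun k ↦ if k ∈ s then f k else 0
  have relation : v ᵥ* Matrix.of X = 0 := by
    ext l
    simpa [v, vecMul, dotProduct, ite_mul] using congrFun hf l
  rw [mleExists_self_mul_transpose_iff]
  intro h
  have hzero := h (vecMulVec v v) ⟨by simpa using posSemidef_vecMulVec_self_star v, ?_⟩ <| by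
    rw [mul_vecMulVec, mulVec_transpose, relation, zero_vecMulVec]
  · exact hfi (by simpa [v, hi, vecMulVec_apply] using congrFun₂ hzero i i)
  · intro j k hjk hadj
    have : ¬ (j ∈ s ∧ k ∈ s) := fun ⟨hj, hk⟩ ↦ hadj (hs hj hk hjk)
    rw [not_and_or] at this
    rcases this with hj | hk
    · simp [v, vecMulVec_apply, hj]
    · simp [v, vecMulVec_apply, hk]

theorem not_genericMLEExists_of_isClique {s : Finset (Fin n)} (hs : G.IsClique s)
    (hd : d < s.card) : ¬ GenericMLEExists d (graphModel n G) :=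
  not_ae_of_isOpen isOpen_univ Set.univ_nonempty fun X _ ↦ not_mleExists_of_isClique hs hd X

end GenericExistence

section PlanarVectors

variable {ι : Type*} (x : ι → Fin 2 → ℝ)

/-- The `2 × 2` minor of the vectors `x i` and `x j`, written `[i j]` below. -/
def bracket (i j : ι) : ℝ := x i 0 * x j 1 - x i 1 * x j 0

/-- The vectors `x i` turn counterclockwise as `i` increases, by less than half a turn in total. -/
def IsCounterclockwise [LT ι] : Prop := ∀ ⦃i j⦄, i < j → 0 < bracket x i j

theorem isOpen_setOf_isCounterclockwise [Finite ι] [LT ι] :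
    IsOpen {x : ι → Fin 2 → ℝ | IsCounterclockwise x} := by
  simp only [IsCounterclockwise, bracket, Set.ofPred_forall]
  exact isOpen_iInter_of_finite fun i ↦ isOpen_iInter_of_finite fun j ↦
    isOpen_iInter_of_finite fun _ ↦ isOpen_lt continuous_const (by fun_prop)

theorem isCounterclockwise_one_natCast (n : ℕ) :
    IsCounterclockwise fun i : Fin n ↦ (![1, (i : ℝ)] : Fin 2 → ℝ) := fun i j hij ↦ by
  simpa [bracket] using hij

variable {x} in
theorem ne_of_bracket_ne_zero {i j : ι} (h : bracket x i j ≠ 0) : i ≠ j := by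
  rintro rfl
  exact h (by rw [bracket]; ring)

variable [DecidableEq ι]

/-- The coefficients `[j k], -[i k], [i j]` of the linear relation among the vectors
`x i`, `x j`, `x k` given by Cramer's rule. -/
def circuit (i j k : ι) : ι → ℝ :=
  Pi.single i (bracket x j k) - Pi.single j (bracket x i k) + Pi.single k (bracket x i j)

/-- The rank one matrix of the circuit on `i`, `j`, `k`, scaled so that its entries at `i j`, `j k`
and `i k` are `-[i j]⁻¹`, `-[j k]⁻¹` and `[i k]⁻¹`: the entry at a side of the triangle depends on
that side only. -/
def triangleStress (i j k : ι) : Matrix ι ι ℝ :=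
  (bracket x i j * bracket x i k * bracket x j k)⁻¹ • vecMulVec (circuit x i j k) (circuit x i j k)

variable {x} {i j k l p q : ι}

theorem circuit_apply_of_ne (hi : l ≠ i) (hj : l ≠ j) (hk : l ≠ k) : circuit x i j k l = 0 := by
  simp [circuit, hi, hj, hk]

theorem circuit_apply_first (hij : i ≠ j) (hik : i ≠ k) : circuit x i j k i = bracket x j k := by
  simp [circuit, hij, hik]

theorem circuit_apply_second (hij : i ≠ j) (hjk : j ≠ k) :
    circuit x i j k j = -bracket x i k := by
  simp [circuit, hij.symm, hjk]

theorem circuit_apply_third (hik : i ≠ k) (hjk : j ≠ k) : circuit x i j k k = bracket x i j := by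
  simp [circuit, hik.symm, hjk.symm]

theorem triangleStress_apply_first (hij : bracket x i j ≠ 0) (hik : bracket x i k ≠ 0)
    (hjk : bracket x j k ≠ 0) (hl : l ≠ i) :
    triangleStress x i j k i l =
      (Pi.single k (bracket x i k)⁻¹ - Pi.single j (bracket x i j)⁻¹ : ι → ℝ) l := by
  rw [triangleStress, Matrix.smul_apply, vecMulVec_apply,
    circuit_apply_first (ne_of_bracket_ne_zero hij) (ne_of_bracket_ne_zero hik), smul_eq_mul]
  rcases eq_or_ne l j with rfl | hlj
  · rw [circuit_apply_second hl.symm (ne_of_bracket_ne_zero hjk), Pi.sub_apply,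
      Pi.single_eq_of_ne (ne_of_bracket_ne_zero hjk), Pi.single_eq_same]
    field_simp
    ring
  rcases eq_or_ne l k with rfl | hlk
  · rw [circuit_apply_third hl.symm hlj.symm, Pi.sub_apply, Pi.single_eq_same,
      Pi.single_eq_of_ne hlj]
    field_simp
    ring
  · rw [circuit_apply_of_ne hl hlj hlk]
    simp [hlj, hlk]

theorem triangleStress_apply_eq_zero
    (h : circuit x i j k p = 0 ∨ circuit x i j k q = 0) : triangleStress x i j k p q = 0 := by
  rw [triangleStress, Matrix.smul_apply, vecMulVec_apply, mul_eq_zero.mpr h, smul_zero]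

theorem posSemidef_triangleStress [Finite ι] (hij : 0 < bracket x i j) (hik : 0 < bracket x i k)
    (hjk : 0 < bracket x j k) : (triangleStress x i j k).PosSemidef :=
  PosSemidef.smul (by simpa using posSemidef_vecMulVec_self_star (circuit x i j k)) (by positivity)

variable [Fintype ι]

theorem circuit_vecMul_eq_zero : circuit x i j k ᵥ* Matrix.of x = 0 := by
  refine funext (Fin.forall_fin_two.mpr ⟨?_, ?_⟩) <;>
    simp only [circuit, bracket, add_vecMul, sub_vecMul, single_vecMul, of_row, Pi.add_apply,
      Pi.sub_apply, Pi.smul_apply, smul_eq_mul, Pi.zero_apply] <;>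
    ring

theorem transpose_mul_triangleStress : (Matrix.of x)ᵀ * triangleStress x i j k = 0 := by
  rw [triangleStress, Matrix.mul_smul, mul_vecMulVec, mulVec_transpose, circuit_vecMul_eq_zero,
    zero_vecMulVec, smul_zero]

end PlanarVectors

section CycleFan

variable {m : ℕ} {x : Fin (m + 3) → Fin 2 → ℝ}

/-- The sum of the stresses of the triangles `0, k, k + 1` that triangulate the cycle. -/
def fanStress (x : Fin (m + 3) → Fin 2 → ℝ) : Matrix (Fin (m + 3)) (Fin (m + 3)) ℝ :=
  ∑ k : Fin (m + 1), triangleStress x 0 k.castSucc.succ k.succ.succ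

theorem transpose_mul_fanStress : (Matrix.of x)ᵀ * fanStress x = 0 := by
  rw [fanStress, Matrix.mul_sum]
  exact Finset.sum_eq_zero fun _ _ ↦ transpose_mul_triangleStress

theorem fanStress_zero_apply_succ (hx : IsCounterclockwise x) (j : Fin (m + 2)) :
    fanStress x 0 j.succ =
      (Pi.single (Fin.last (m + 1)) (bracket x 0 (Fin.last (m + 2)))⁻¹ -
        Pi.single 0 (bracket x 0 1)⁻¹ : Fin (m + 2) → ℝ) j := by
  let spoke (k : Fin (m + 2)) : ℝ := (Pi.single k (bracket x 0 k.succ)⁻¹ : Fin (m + 2) → ℝ) j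
  have telescope : ∑ k : Fin (m + 1), (spoke k.succ - spoke k.castSucc) =
      spoke (Fin.last (m + 1)) - spoke 0 := by
    have := (Fin.sum_univ_succ spoke).symm.trans (Fin.sum_univ_castSucc spoke)
    rw [Finset.sum_sub_distrib]
    linarith
  have row (k : Fin (m + 1)) : triangleStress x 0 k.castSucc.succ k.succ.succ 0 j.succ =
      spoke k.succ - spoke k.castSucc := by
    rw [triangleStress_apply_first (hx (Fin.succ_pos _)).ne' (hx (Fin.succ_pos _)).ne'
      (hx (Fin.succ_lt_succ_iff.mpr k.castSucc_lt_succ)).ne' (Fin.succ_ne_zero j)]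
    simp [spoke, Pi.single_apply]
  rw [fanStress, Matrix.sum_apply, Finset.sum_congr rfl fun k _ ↦ row k, telescope]
  rfl

theorem posSemidef_fanStress (hx : IsCounterclockwise x) : (fanStress x).PosSemidef :=
  posSemidef_sum _ fun k _ ↦ posSemidef_triangleStress (hx (Fin.succ_pos _))
    (hx (Fin.succ_pos _)) (hx (Fin.succ_lt_succ_iff.mpr k.castSucc_lt_succ))

theorem fanStress_ne_zero (hx : IsCounterclockwise x) : fanStress x ≠ 0 := by
  intro h
  have entry := fanStress_zero_apply_succ hx 0
  rw [h, Fin.succ_zero_eq_one] at entry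
  exact (hx Fin.zero_lt_one).ne' (by simpa using entry)

theorem fanStress_zero_apply_of_not_adj (hx : IsCounterclockwise x)
    {j : Fin (m + 3)} (hj : j ≠ 0) (hadj : ¬ (SimpleGraph.cycleGraph (m + 3)).Adj 0 j) :
    fanStress x 0 j = 0 := by
  obtain ⟨j, rfl⟩ := Fin.exists_succ_eq.mpr hj
  rw [SimpleGraph.cycleGraph_adj, not_or, sub_zero] at hadj
  have ne_first : j ≠ 0 := by
    rintro rfl
    exact hadj.2 Fin.succ_zero_eq_one
  have ne_last : j ≠ Fin.last (m + 1) := by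
    rintro rfl
    exact hadj.1 (by rw [Fin.succ_last, sub_eq_iff_eq_add', Fin.last_add_one])
  rw [fanStress_zero_apply_succ hx, Pi.sub_apply, Pi.single_eq_of_ne ne_last,
    Pi.single_eq_of_ne ne_first, sub_zero]

theorem fanStress_succ_apply_succ_of_not_adj {i j : Fin (m + 2)} (hij : i ≠ j)
    (hadj : ¬ (SimpleGraph.cycleGraph (m + 3)).Adj i.succ j.succ) :
    fanStress x i.succ j.succ = 0 := by
  rw [fanStress, Matrix.sum_apply]
  refine Finset.sum_eq_zero fun k _ ↦ triangleStress_apply_eq_zero ?_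
  have consecutive : (SimpleGraph.cycleGraph (m + 3)).Adj k.castSucc.succ k.succ.succ :=
    SimpleGraph.pathGraph_le_cycleGraph (SimpleGraph.pathGraph_adj.mpr (by simp))
  have eq_or_eq {l : Fin (m + 2)} (hl : circuit x 0 k.castSucc.succ k.succ.succ l.succ ≠ 0) :
      l = k.castSucc ∨ l = k.succ := by
    contrapose! hl
    exact circuit_apply_of_ne (Fin.succ_ne_zero l) (Fin.succ_injective _ |>.ne hl.1)
      (Fin.succ_injective _ |>.ne hl.2)
  contrapose! hadj
  rcases eq_or_eq hadj.1 with rfl | rfl <;> rcases eq_or_eq hadj.2 with rfl | rfl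
  · exact absurd rfl hij
  · exact consecutive
  · exact consecutive.symm
  · exact absurd rfl hij

theorem fanStress_mem_psdGraphModel (hx : IsCounterclockwise x) :
    fanStress x ∈ psdGraphModel (m + 3) (SimpleGraph.cycleGraph (m + 3)) := by
  have hpsd := posSemidef_fanStress hx
  refine ⟨hpsd, fun i j hij hadj ↦ ?_⟩
  cases i using Fin.cases with
  | zero => exact fanStress_zero_apply_of_not_adj hx hij.symm hadj
  | succ i =>
    cases j using Fin.cases with
    | zero =>
      rw [← hpsd.isHermitian.apply, fanStress_zero_apply_of_not_adj hx hij (hadj ·.symm), star_zero]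
    | succ j => exact fanStress_succ_apply_succ_of_not_adj (fun h ↦ hij (h ▸ rfl)) hadj

theorem not_mleExists_cycleGraph_of_isCounterclockwise (hx : IsCounterclockwise x) :
    ¬ MLEExists (Matrix.of x * (Matrix.of x)ᵀ)
      (graphModel (m + 3) (SimpleGraph.cycleGraph (m + 3))) := fun h ↦
  fanStress_ne_zero hx <| (mleExists_self_mul_transpose_iff _).mp h _
    (fanStress_mem_psdGraphModel hx) transpose_mul_fanStress

end CycleFan

section CycleThreshold

variable {n : ℕ}

theorem not_genericMLEExists_one_cycleGraph (hn : 3 ≤ n) :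
    ¬ GenericMLEExists 1 (graphModel n (SimpleGraph.cycleGraph n)) := by
  obtain ⟨m, rfl⟩ := Nat.exists_eq_add_of_le' hn
  have edge : (SimpleGraph.cycleGraph (m + 3)).Adj 0 1 := by simp [SimpleGraph.cycleGraph_adj]
  exact not_genericMLEExists_of_isClique (s := {0, 1}) (by simpa using edge) (by simp)

theorem not_genericMLEExists_two_cycleGraph (hn : 3 ≤ n) :
    ¬ GenericMLEExists 2 (graphModel n (SimpleGraph.cycleGraph n)) := by
  obtain ⟨m, rfl⟩ := Nat.exists_eq_add_of_le' hn
  exact not_ae_of_isOpen isOpen_setOf_isCounterclockwise ⟨_, isCounterclockwise_one_natCast _⟩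
    fun _ ↦ not_mleExists_cycleGraph_of_isCounterclockwise

theorem genericMLEExists_three_cycleGraph (hn : 3 ≤ n) :
    GenericMLEExists 3 (graphModel n (SimpleGraph.cycleGraph n)) := by
  obtain ⟨m, rfl⟩ := Nat.exists_eq_add_of_le' hn
  refine genericMLEExists_graphModel_of_maxDegree_lt (Nat.lt_succ_of_le ?_)
  exact SimpleGraph.maxDegree_le_of_forall_degree_le _ 2 fun _ ↦
    SimpleGraph.cycleGraph_degree_three_le.le

theorem mlt_cycleGraph_four_general (hn : 3 ≤ n) :
    mlt n (graphModel n (SimpleGraph.cycleGraph n)) = 3 := by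
  refine IsLeast.csInf_eq ⟨⟨three_pos, genericMLEExists_three_cycleGraph hn⟩, ?_⟩
  rintro d ⟨hd, hgeneric : GenericMLEExists d _⟩
  by_contra! hlt
  interval_cases d
  · exact not_genericMLEExists_one_cycleGraph hn hgeneric
  · exact not_genericMLEExists_two_cycleGraph hn hgeneric

end CycleThreshold

/-- The maximum likelihood threshold of the four-cycle equals `3`. -/
theorem mlt_cycleGraph_four : mlt 4 (graphModel 4 (SimpleGraph.cycleGraph 4)) = 3 :=
  mlt_cycleGraph_four_general (by norm_num)
end
end

section
/- For every simple graph G on vertex set {1,…,n} and every positive integer d, there exists a subset N of the space of functions p : {1,…,n} → ℝ^d of Lebesgue measure zero such that either (G,p) is locally rigid for every p ∉ N, or (G,p) is not locally rigid for every p ∉ N. -/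
open MeasureTheory

noncomputable section

/-- Two `d`-dimensional frameworks `(G,p)` and `(G,q)` are equivalent if corresponding
edge lengths agree. -/
def FrameworkEquiv {n d : ℕ} (G : SimpleGraph (Fin n))
    (p q : Fin n → EuclideanSpace ℝ (Fin d)) : Prop :=
  ∀ i j, G.Adj i j → ‖q i - q j‖ = ‖p i - p j‖

/-- Two `d`-dimensional frameworks `(G,p)` and `(G,q)` are congruent if all pairwise
distances agree. -/
def FrameworkCongruent {n d : ℕ}
    (p q : Fin n → EuclideanSpace ℝ (Fin d)) : Prop :=
  ∀ i j, ‖q i - q j‖ = ‖p i - p j‖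

/-- A framework `(G,p)` is locally rigid if every sufficiently close framework that is
equivalent to it is congruent to it. -/
def LocallyRigid {n d : ℕ} (G : SimpleGraph (Fin n))
    (p : Fin n → EuclideanSpace ℝ (Fin d)) : Prop :=
  ∃ ε > (0 : ℝ), ∀ q : Fin n → EuclideanSpace ℝ (Fin d),
    (∀ i, ‖p i - q i‖ ≤ ε) → FrameworkEquiv G p q → FrameworkCongruent p q

/-!
Local rigidity of `(G, p)` means that, near `p`, the edge lengths of `G` determine all pairwise
distances. More generally, let `f` and `g` be real-analytic on a finite-dimensional space. The ranks
of `Df` and of `D(f, g)` attain their maxima outside a null set: a minor that is nonzero somewhere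
is an analytic function that is not identically zero, so by Fubini along the lines through a nonzero
point it is nonzero almost everywhere. Where both ranks are maximal, the constant rank theorem shows
that `f` locally determines `g` exactly when `ker Df ≤ ker Dg` nearby, that is, when the two maximal
ranks agree; this condition does not depend on the point.
-/

open Filter Module Set Topology
open scoped ContDiff

section AnalyticZeros

variable {E F : Type*} [NormedAddCommGroup E] [NormedSpace ℝ E] [FiniteDimensional ℝ E]
  [MeasurableSpace E] [BorelSpace E] (μ : Measure E) [μ.IsAddHaarMeasure]
  [NormedAddCommGroup F] [NormedSpace ℝ F]

theorem ae_ne_zero_of_contDiff_omega_of_real {f : ℝ → F} (hf : ContDiff ℝ ω f) {t₀ : ℝ}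
    (ht₀ : f t₀ ≠ 0) : ∀ᵐ t, f t ≠ 0 := by
  have hcodiscrete : ∀ᶠ t in codiscrete ℝ, f t ≠ 0 :=
    (hf.analyticOnNhd.eqOn_zero_or_eventually_ne_zero_of_preconnected
      isPreconnected_univ).resolve_left fun h => ht₀ (h (mem_univ t₀))
  have hae := hcodiscrete.filter_mono (ae_restrict_le_codiscreteWithin (μ := volume) .univ)
  rwa [Measure.restrict_univ] at hae

theorem ae_of_ae_add_smul {P : E → Prop} (hP : MeasurableSet {x | P x}) (x₀ : E)
    (h : ∀ v : E, ∀ᵐ t : ℝ, P (x₀ + t • v)) : ∀ᵐ x ∂μ, P x := by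
  have hmeas : MeasurableSet {z : E × ℝ | P (x₀ + z.2 • z.1)} :=
    (show Continuous fun z : E × ℝ => x₀ + z.2 • z.1 by fun_prop).measurable hP
  -- Some nonzero `t` works for almost every `v`; `v ↦ x₀ + t • v` is an affine automorphism of `E`.
  have hswap : ∀ᵐ t : ℝ, ∀ᵐ v ∂μ, P (x₀ + t • v) :=
    (Measure.ae_ae_comm hmeas).1 (.of_forall h)
  obtain ⟨t, ht, ht₀⟩ := (hswap.and (Measure.ae_ne volume 0)).exists
  have hquasi : Measure.QuasiMeasurePreserving (fun x => t⁻¹ • (-x₀ + x)) μ μ :=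
    (Measure.quasiMeasurePreserving_smul μ (inv_ne_zero ht₀)).comp
      (measurePreserving_add_left μ (-x₀)).quasiMeasurePreserving
  filter_upwards [hquasi.ae ht] with x hx
  simpa [smul_inv_smul₀ ht₀] using hx

theorem ae_ne_zero_of_contDiff_omega {f : E → F} (hf : ContDiff ℝ ω f) {x₀ : E} (hx₀ : f x₀ ≠ 0) :
    ∀ᵐ x ∂μ, f x ≠ 0 := by
  refine ae_of_ae_add_smul μ (isOpen_ne_fun hf.continuous continuous_const).measurableSet x₀
    fun v => ?_
  have hline : ContDiff ℝ ω fun t : ℝ => f (x₀ + t • v) := by fun_prop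
  exact ae_ne_zero_of_contDiff_omega_of_real hline (t₀ := 0) (by simpa using hx₀)

end AnalyticZeros

section Rank

variable {𝕜 E F G : Type*} [RCLike 𝕜] [NormedAddCommGroup E] [NormedSpace 𝕜 E]
  [FiniteDimensional 𝕜 E] [NormedAddCommGroup F] [NormedSpace 𝕜 F]
  [NormedAddCommGroup G] [NormedSpace 𝕜 G]

theorem contDiff_det {n : ℕ∞ω} : ContDiff 𝕜 n (ContinuousLinearMap.det : (E →L[𝕜] E) → 𝕜) := by
  let b := finBasis 𝕜 E
  have hentry (i j) :
      ContDiff 𝕜 n fun A : E →L[𝕜] E => LinearMap.toMatrix b b A.toLinearMap i j := by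
    simp only [LinearMap.toMatrix_apply]
    have := (b.coord i).toContinuousLinearMap.contDiff (n := n)
    exact this.comp (ContinuousLinearMap.apply 𝕜 E (b j)).contDiff
  have hdet (A : E →L[𝕜] E) : A.det = (LinearMap.toMatrix b b A.toLinearMap).det :=
    (LinearMap.det_toMatrix b A.toLinearMap).symm
  simp only [funext hdet, Matrix.det_apply]
  fun_prop

theorem finrank_range_comp_le (L : F →L[𝕜] G) (A : E →L[𝕜] F) :
    finrank 𝕜 (L ∘L A).range ≤ finrank 𝕜 A.range := by
  rw [show (L ∘L A).range = A.range.map L.toLinearMap from LinearMap.range_comp _ _]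
  exact Submodule.finrank_map_le _ _

theorem ker_eq_ker_of_finrank_range_le {A : E →L[𝕜] F} {B : E →L[𝕜] G} (hker : A.ker ≤ B.ker)
    (hrank : finrank 𝕜 A.range ≤ finrank 𝕜 B.range) : A.ker = B.ker := by
  have hA := A.toLinearMap.finrank_range_add_finrank_ker
  have hB := B.toLinearMap.finrank_range_add_finrank_ker
  exact Submodule.eq_of_le_of_finrank_le hker (by lia)

theorem exists_contDiff_ne_zero_imp_finrank_range_le (A₀ : E →L[𝕜] F) :
    ∃ D : (E →L[𝕜] F) → 𝕜, ContDiff 𝕜 ω D ∧ D A₀ ≠ 0 ∧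
      ∀ A, D A ≠ 0 → finrank 𝕜 A₀.range ≤ finrank 𝕜 A.range := by
  obtain ⟨π, hπ⟩ := Submodule.ClosedComplemented.of_finiteDimensional A₀.range
  obtain ⟨s, hs⟩ := A₀.rangeRestrict.exists_rightInverse_of_surjective
    (LinearMap.range_rangeRestrict _)
  -- A coordinate-free maximal minor: `s` lifts the range of `A₀` and `π` projects back onto it.
  refine ⟨fun A => (π ∘L A ∘L s).det, contDiff_det.comp (by fun_prop), ?_, fun A hA => ?_⟩
  · have hid : π ∘L A₀ ∘L s = .id 𝕜 A₀.range := by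
      ext y
      rw [← hs, ContinuousLinearMap.comp_apply]
      exact congrArg Subtype.val (hπ (A₀.rangeRestrict (s y)))
    simp [hid, ContinuousLinearMap.det]
  · have hsurj : (π ∘L A).range = ⊤ := LinearMap.range_eq_top.2 fun y =>
      have ⟨x, hx⟩ := (LinearMap.equivOfDetNeZero _ hA).surjective y
      ⟨s x, hx⟩
    rw [← finrank_top 𝕜 A₀.range, ← hsurj]
    exact finrank_range_comp_le π A

theorem eventually_finrank_range_le (A₀ : E →L[𝕜] F) :
    ∀ᶠ A in 𝓝 A₀, finrank 𝕜 A₀.range ≤ finrank 𝕜 A.range := by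
  obtain ⟨D, hD, hD₀, hle⟩ := exists_contDiff_ne_zero_imp_finrank_range_le A₀
  exact (hD.continuous.continuousAt.eventually_ne hD₀).mono hle

theorem exists_eventually_ker_comp_eq (A₀ : E →L[𝕜] F) :
    ∃ π : F →L[𝕜] A₀.range, (π ∘L A₀).range = ⊤ ∧
      ∀ᶠ A in 𝓝 A₀, finrank 𝕜 A.range ≤ finrank 𝕜 A₀.range → (π ∘L A).ker = A.ker := by
  obtain ⟨π, hπ⟩ := Submodule.ClosedComplemented.of_finiteDimensional A₀.range
  have hsurj : (π ∘L A₀).range = ⊤ := LinearMap.range_eq_top.2 fun ⟨_, x, hx⟩ =>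
    ⟨x, by subst hx; exact hπ ⟨_, x, rfl⟩⟩
  have hcomp : Continuous fun A : E →L[𝕜] F => π ∘L A := by fun_prop
  refine ⟨π, hsurj, ?_⟩
  filter_upwards [hcomp.continuousAt.eventually (eventually_finrank_range_le (π ∘L A₀))]
    with A hA hmax
  have hrank : finrank 𝕜 (π ∘L A₀).range = finrank 𝕜 A₀.range := by rw [hsurj, finrank_top]
  have hker : A.ker ≤ (π ∘L A).ker := LinearMap.ker_le_ker_comp _ _
  exact (ker_eq_ker_of_finrank_range_le hker (hmax.trans (hrank.ge.trans hA))).symm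

theorem ker_le_ker_iff_finrank_range_prod_le (A : E →L[𝕜] F) (B : E →L[𝕜] G) :
    A.ker ≤ B.ker ↔ finrank 𝕜 (A.prod B).range ≤ finrank 𝕜 A.range := by
  have hker : (A.prod B).ker = A.ker ⊓ B.ker := ContinuousLinearMap.ker_prod A B
  rw [← inf_eq_left, ← hker]
  refine ⟨fun h => ?_, ker_eq_ker_of_finrank_range_le (hker ▸ inf_le_left)⟩
  have hA := A.toLinearMap.finrank_range_add_finrank_ker
  have hAB := (A.prod B).toLinearMap.finrank_range_add_finrank_ker
  rw [h] at hAB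
  lia

end Rank

section GenericRank

variable {X E F : Type*} [NormedAddCommGroup X] [NormedSpace ℝ X] [FiniteDimensional ℝ X]
  [MeasurableSpace X] [BorelSpace X] (μ : Measure X) [μ.IsAddHaarMeasure]
  [NormedAddCommGroup E] [NormedSpace ℝ E] [FiniteDimensional ℝ E]
  [NormedAddCommGroup F] [NormedSpace ℝ F]

theorem ae_forall_finrank_range_le {A : X → E →L[ℝ] F} (hA : ContDiff ℝ ω A) :
    ∀ᵐ x ∂μ, ∀ y, finrank ℝ (A y).range ≤ finrank ℝ (A x).range := by
  have hbdd : BddAbove (range fun x => finrank ℝ (A x).range) :=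
    ⟨finrank ℝ E, forall_mem_range.2 fun x => (A x).toLinearMap.finrank_range_le⟩
  obtain ⟨x₀, hx₀⟩ := Nat.sSup_mem (range_nonempty _) hbdd
  obtain ⟨D, hD, hD₀, hle⟩ := exists_contDiff_ne_zero_imp_finrank_range_le (A x₀)
  filter_upwards [ae_ne_zero_of_contDiff_omega μ (hD.comp hA) hD₀] with x hx y
  calc finrank ℝ (A y).range ≤ finrank ℝ (A x₀).range :=
        (le_csSup hbdd (mem_range_self y)).trans_eq hx₀.symm
    _ ≤ finrank ℝ (A x).range := hle _ hx

end GenericRank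

/-- Near `x`, the fiber of `f` through `x` is contained in the fiber of `g` through `x`. For edge
lengths `f` and all pairwise distances `g` this is local rigidity at `x`. -/
def LocallyDetermines {X F G : Type*} [TopologicalSpace X] (f : X → F) (g : X → G) (x : X) : Prop :=
  ∀ᶠ y in 𝓝 x, f y = f x → g y = g x

section Submersion

variable {𝕜 E F G K : Type*} [RCLike 𝕜] [NormedAddCommGroup E] [NormedSpace 𝕜 E]
  [NormedAddCommGroup F] [NormedSpace 𝕜 F] [NormedAddCommGroup G] [NormedSpace 𝕜 G]
  [NormedAddCommGroup K] [NormedSpace 𝕜 K]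

theorem eventually_differentiableAt_of_contDiffAt {f : E → F} {x : E} (hf : ContDiffAt 𝕜 1 f x) :
    ∀ᶠ y in 𝓝 x, DifferentiableAt 𝕜 f y :=
  (hf.eventually (by simp)).mono fun _ hy => hy.differentiableAt one_ne_zero

theorem eventually_eq_of_eventually_fderiv_eq_zero {f : E → F} {x : E}
    (hf : ∀ᶠ y in 𝓝 x, DifferentiableAt 𝕜 f y) (hf' : ∀ᶠ y in 𝓝 x, fderiv 𝕜 f y = 0) :
    ∀ᶠ y in 𝓝 x, f y = f x := by
  let : NormedSpace ℝ E := .restrictScalars ℝ 𝕜 E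
  obtain ⟨U, hU, hUo, hxU⟩ := eventually_nhds_iff.1 (hf.and hf')
  have hopen : IsOpen (U ∩ f ⁻¹' {f x}) := hUo.isOpen_inter_preimage_of_fderiv_eq_zero (𝕜 := 𝕜)
    (fun y hy => (hU y hy).1.differentiableWithinAt) (fun y hy => (hU y hy).2) _
  exact (hopen.eventually_mem ⟨hxU, rfl⟩).mono fun y hy => hy.2

theorem fderiv_comp_eq_zero_of_ker_le {f : E → F} {g : E → G} {c : K → E} {z : K} {a : F}
    (hc : DifferentiableAt 𝕜 c z) (hf : DifferentiableAt 𝕜 f (c z))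
    (hg : DifferentiableAt 𝕜 g (c z)) (hker : (fderiv 𝕜 f (c z)).ker ≤ (fderiv 𝕜 g (c z)).ker)
    (hfc : ∀ᶠ w in 𝓝 z, f (c w) = a) : fderiv 𝕜 (g ∘ c) z = 0 := by
  have hfc' : fderiv 𝕜 (f ∘ c) z = 0 :=
    (EventuallyEq.fderiv_eq hfc).trans (fderiv_const_apply a)
  rw [fderiv_comp z hf hc] at hfc'
  rw [fderiv_comp z hg hc]
  ext v
  exact hker (DFunLike.congr_fun hfc' v)

variable [CompleteSpace E] [FiniteDimensional 𝕜 F]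

theorem exists_contDiffAt_fiber_parametrization {f : E → F} {x : E} (hf : ContDiffAt 𝕜 1 f x)
    (hsurj : (fderiv 𝕜 f x).range = ⊤) :
    ∃ (c : (fderiv 𝕜 f x).ker → E) (ψ : E → (fderiv 𝕜 f x).ker),
      ContDiffAt 𝕜 1 c (ψ x) ∧ ContinuousAt ψ x ∧ c (ψ x) = x ∧
      (∀ᶠ z in 𝓝 (ψ x), f (c z) = f x) ∧ ∀ᶠ y in 𝓝 x, f y = f x → c (ψ y) = y := by
  have : CompleteSpace F := FiniteDimensional.complete 𝕜 F
  let φ := (hf.hasStrictFDerivAt one_ne_zero).implicitFunctionDataOfComplemented f _ hsurj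
    (fderiv 𝕜 f x).ker_closedComplemented_of_finiteDimensional_range
  have hright : ContDiffAt 𝕜 1 φ.rightFun x :=
    φ.rightDeriv.contDiff.contDiffAt.comp x (contDiffAt_id.sub contDiffAt_const)
  refine ⟨φ.implicitFunction (f x), φ.rightFun, ?_, hright.continuousAt,
    φ.implicitFunction_apply_image.self_of_nhds,
    (Continuous.prodMk_right (f x)).continuousAt.eventually φ.leftFun_implicitFunction,
    φ.leftFun_eq_iff_implicitFunction.mono fun y hy => hy.1⟩
  exact (ImplicitFunctionData.contDiffAt_implicitFunction (φ := φ) hf hright one_ne_zero).comp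
    (φ.rightFun x) (contDiffAt_const.prodMk contDiffAt_id)

theorem locallyDetermines_of_range_eq_top_of_ker_le {f : E → F} {g : E → G} {x : E}
    (hf : ContDiffAt 𝕜 1 f x) (hsurj : (fderiv 𝕜 f x).range = ⊤)
    (hg : ∀ᶠ y in 𝓝 x, DifferentiableAt 𝕜 g y)
    (hker : ∀ᶠ y in 𝓝 x, (fderiv 𝕜 f y).ker ≤ (fderiv 𝕜 g y).ker) : LocallyDetermines f g x := by
  obtain ⟨c, ψ, hc, hψ, hcx, hfc, hcψ⟩ := exists_contDiffAt_fiber_parametrization hf hsurj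
  have hcont : Tendsto c (𝓝 (ψ x)) (𝓝 x) := by simpa only [hcx] using hc.continuousAt.tendsto
  have hcdiff := eventually_differentiableAt_of_contDiffAt hc
  have hgc : ∀ᶠ z in 𝓝 (ψ x), g (c z) = g (c (ψ x)) := by
    refine eventually_eq_of_eventually_fderiv_eq_zero (𝕜 := 𝕜) (f := g ∘ c) ?_ ?_
    · filter_upwards [hcdiff, hcont.eventually hg] with z hz hgz using hgz.comp z hz
    · filter_upwards [hcdiff, hcont.eventually (eventually_differentiableAt_of_contDiffAt hf),
        hcont.eventually hg, hcont.eventually hker, hfc.eventually_nhds] with z hz hfz hgz hkz hfcz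
      exact fderiv_comp_eq_zero_of_ker_le hz hfz hgz hkz hfcz
  filter_upwards [hψ.eventually hgc, hcψ] with y hgy hcψy hy
  simpa only [hcψy hy, hcx] using hgy

theorem LocallyDetermines.ker_le_of_range_eq_top {f : E → F} {g : E → G} {f' : E →L[𝕜] F}
    {g' : E →L[𝕜] G} {x : E} (h : LocallyDetermines f g x) (hf : HasStrictFDerivAt f f' x)
    (hsurj : f'.range = ⊤) (hg : HasFDerivAt g g' x) : f'.ker ≤ g'.ker := by
  let c := hf.implicitFunction f f' hsurj (f x)
  have hcx : c 0 = x := hf.implicitFunction_apply_image hsurj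
  have hc : HasFDerivAt c f'.ker.subtypeL 0 := (hf.to_implicitFunction hsurj).hasFDerivAt
  have hcont : Tendsto c (𝓝 0) (𝓝 x) := by simpa only [hcx] using hc.continuousAt.tendsto
  have hfc : ∀ᶠ z in 𝓝 0, f (c z) = f x :=
    (Continuous.prodMk_right (f x)).continuousAt.eventually (hf.map_implicitFunction_eq hsurj)
  have hgc : g ∘ c =ᶠ[𝓝 0] fun _ => g x := by
    filter_upwards [hcont.eventually h, hfc] with z hz hfz using hz hfz
  have hcomp : HasFDerivAt (g ∘ c) (g' ∘L f'.ker.subtypeL) 0 := (hcx.symm ▸ hg).comp 0 hc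
  have hzero : g' ∘L f'.ker.subtypeL = 0 :=
    (hcomp.congr_of_eventuallyEq hgc.symm).unique (hasFDerivAt_const (g x) 0)
  exact fun v hv => DFunLike.congr_fun hzero (⟨v, hv⟩ : f'.ker)

end Submersion

section ConstantRank

variable {𝕜 E F G : Type*} [RCLike 𝕜] [NormedAddCommGroup E] [NormedSpace 𝕜 E]
  [FiniteDimensional 𝕜 E] [NormedAddCommGroup F] [NormedSpace 𝕜 F]
  [NormedAddCommGroup G] [NormedSpace 𝕜 G] {f : E → F} {g : E → G} {x : E}

variable (𝕜) in
/-- The rank of `f` at `x`, that is, of its derivative; it is `0` where `f` is not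
differentiable. -/
def fderivRank (f : E → F) (x : E) : ℕ :=
  finrank 𝕜 (fderiv 𝕜 f x).range

theorem exists_submersion_comp_of_isLocalMax_fderivRank (hf : ContDiffAt 𝕜 1 f x)
    (hmax : IsLocalMax (fderivRank 𝕜 f) x) :
    ∃ π : F →L[𝕜] (fderiv 𝕜 f x).range, (fderiv 𝕜 (π ∘ f) x).range = ⊤ ∧
      ∀ᶠ y in 𝓝 x, (fderiv 𝕜 (π ∘ f) y).ker = (fderiv 𝕜 f y).ker := by
  obtain ⟨π, hsurj, hker⟩ := exists_eventually_ker_comp_eq (fderiv 𝕜 f x)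
  have hderiv : ∀ᶠ y in 𝓝 x, fderiv 𝕜 (π ∘ f) y = π ∘L fderiv 𝕜 f y :=
    (eventually_differentiableAt_of_contDiffAt hf).mono fun y hy =>
      (π.hasFDerivAt.comp y hy.hasFDerivAt).fderiv
  refine ⟨π, by rwa [hderiv.self_of_nhds], ?_⟩
  filter_upwards [hderiv, hmax, (hf.continuousAt_fderiv one_ne_zero).eventually hker]
    with y hy hmaxy hkery
  rw [hy, hkery hmaxy]

theorem locallyDetermines_of_isLocalMax_fderivRank_of_ker_le (hf : ContDiffAt 𝕜 1 f x)
    (hmax : IsLocalMax (fderivRank 𝕜 f) x) (hg : ∀ᶠ y in 𝓝 x, DifferentiableAt 𝕜 g y)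
    (hker : ∀ᶠ y in 𝓝 x, (fderiv 𝕜 f y).ker ≤ (fderiv 𝕜 g y).ker) : LocallyDetermines f g x := by
  have : CompleteSpace E := FiniteDimensional.complete 𝕜 E
  obtain ⟨π, hsurj, hkerπ⟩ := exists_submersion_comp_of_isLocalMax_fderivRank hf hmax
  have hπ : LocallyDetermines (π ∘ f) g x := by
    refine locallyDetermines_of_range_eq_top_of_ker_le (π.contDiff.contDiffAt.comp x hf) hsurj hg ?_
    filter_upwards [hkerπ, hker] with y hy hkery using hy.trans_le hkery
  exact hπ.mono fun y hy hfy => hy (congrArg π hfy)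

theorem LocallyDetermines.ker_le_of_isLocalMax_fderivRank (h : LocallyDetermines f g x)
    (hf : ContDiffAt 𝕜 1 f x) (hmax : IsLocalMax (fderivRank 𝕜 f) x)
    (hg : DifferentiableAt 𝕜 g x) : (fderiv 𝕜 f x).ker ≤ (fderiv 𝕜 g x).ker := by
  have : CompleteSpace E := FiniteDimensional.complete 𝕜 E
  obtain ⟨π, hsurj, hkerπ⟩ := exists_submersion_comp_of_isLocalMax_fderivRank hf hmax
  have hπf : ContDiffAt 𝕜 1 (π ∘ f) x := π.contDiff.contDiffAt.comp x hf
  have hfdiff := eventually_differentiableAt_of_contDiffAt hf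
  have hπ : LocallyDetermines (π ∘ f) f x :=
    locallyDetermines_of_range_eq_top_of_ker_le hπf hsurj hfdiff (hkerπ.mono fun y hy => hy.le)
  have hπg : LocallyDetermines (π ∘ f) g x := by
    filter_upwards [hπ, h] with y hfy hgy hy using hgy (hfy hy)
  rw [← hkerπ.self_of_nhds]
  exact hπg.ker_le_of_range_eq_top (hπf.hasStrictFDerivAt one_ne_zero) hsurj hg.hasFDerivAt

theorem ker_fderiv_le_ker_fderiv_iff (hf : DifferentiableAt 𝕜 f x) (hg : DifferentiableAt 𝕜 g x) :
    (fderiv 𝕜 f x).ker ≤ (fderiv 𝕜 g x).ker ↔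
      fderivRank 𝕜 (fun y => (f y, g y)) x ≤ fderivRank 𝕜 f x := by
  rw [ker_le_ker_iff_finrank_range_prod_le, fderivRank, hf.fderiv_prodMk hg, fderivRank]

theorem locallyDetermines_iff_fderivRank_prodMk_le (hf : ContDiffAt 𝕜 1 f x)
    (hg : ContDiffAt 𝕜 1 g x) (hmax : IsLocalMax (fderivRank 𝕜 f) x)
    (hmax' : IsLocalMax (fderivRank 𝕜 fun y => (f y, g y)) x) :
    LocallyDetermines f g x ↔ fderivRank 𝕜 (fun y => (f y, g y)) x ≤ fderivRank 𝕜 f x := by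
  have hfdiff := eventually_differentiableAt_of_contDiffAt hf
  have hgdiff := eventually_differentiableAt_of_contDiffAt hg
  constructor
  · intro h
    rw [← ker_fderiv_le_ker_fderiv_iff hfdiff.self_of_nhds hgdiff.self_of_nhds]
    exact h.ker_le_of_isLocalMax_fderivRank hf hmax hgdiff.self_of_nhds
  · intro hrank
    refine locallyDetermines_of_isLocalMax_fderivRank_of_ker_le hf hmax hgdiff ?_
    have hlower : ∀ᶠ y in 𝓝 x, fderivRank 𝕜 f x ≤ fderivRank 𝕜 f y :=
      (hf.continuousAt_fderiv one_ne_zero).eventually (eventually_finrank_range_le _)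
    filter_upwards [hfdiff, hgdiff, hmax', hlower] with y hfy hgy hmaxy hlowery
    exact (ker_fderiv_le_ker_fderiv_iff hfy hgy).2 (hmaxy.trans (hrank.trans hlowery))

end ConstantRank

section Dichotomy

variable {E F G : Type*} [NormedAddCommGroup E] [NormedSpace ℝ E] [FiniteDimensional ℝ E]
  [MeasurableSpace E] [BorelSpace E] (μ : Measure E) [μ.IsAddHaarMeasure]
  [NormedAddCommGroup F] [NormedSpace ℝ F] [NormedAddCommGroup G] [NormedSpace ℝ G]

theorem ae_forall_fderivRank_le {f : E → F} (hf : ContDiff ℝ ω f) :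
    ∀ᵐ x ∂μ, ∀ y, fderivRank ℝ f y ≤ fderivRank ℝ f x :=
  ae_forall_finrank_range_le μ (hf.fderiv_right le_top)

theorem ae_locallyDetermines_or_ae_not_locallyDetermines {f : E → F} {g : E → G}
    (hf : ContDiff ℝ ω f) (hg : ContDiff ℝ ω g) :
    (∀ᵐ x ∂μ, LocallyDetermines f g x) ∨ ∀ᵐ x ∂μ, ¬ LocallyDetermines f g x := by
  have hregular := (ae_forall_fderivRank_le μ hf).and (ae_forall_fderivRank_le μ (hf.prodMk hg))
  obtain ⟨x₀, hx₀, hx₀'⟩ := hregular.exists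
  let r := fderivRank ℝ f x₀
  let s := fderivRank ℝ (fun y => (f y, g y)) x₀
  have hiff : ∀ᵐ x ∂μ, LocallyDetermines f g x ↔ s ≤ r := by
    filter_upwards [hregular] with x ⟨hx, hx'⟩
    rw [locallyDetermines_iff_fderivRank_prodMk_le (hf.of_le le_top).contDiffAt
      (hg.of_le le_top).contDiffAt (.of_forall hx) (.of_forall hx'),
      le_antisymm (hx₀ x) (hx x₀), le_antisymm (hx₀' x) (hx' x₀)]
  by_cases hsr : s ≤ r
  · exact .inl (hiff.mono fun x hx => hx.2 hsr)
  · exact .inr (hiff.mono fun x hx => mt hx.1 hsr)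

end Dichotomy

section Frameworks

/-- The rigidity map (edge-length map) of `G`. Lengths are squared to make the map analytic, and it
is indexed by darts, so that each edge occurs once in each direction. -/
def rigidityMap {V E : Type*} [NormedAddCommGroup E] (G : SimpleGraph V) (p : V → E) : G.Dart → ℝ :=
  fun e => ‖p e.fst - p e.snd‖ ^ 2

theorem contDiff_rigidityMap {V E : Type*} [Fintype V] [NormedAddCommGroup E]
    [InnerProductSpace ℝ E] (G : SimpleGraph V) [Fintype G.Dart] {k : ℕ∞ω} :
    ContDiff ℝ k (rigidityMap (E := E) G) :=
  contDiff_pi.2 fun e => ((contDiff_apply ℝ E e.fst).sub (contDiff_apply ℝ E e.snd)).norm_sq ℝ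

variable {n d : ℕ} {G : SimpleGraph (Fin n)} {p q : Fin n → EuclideanSpace ℝ (Fin d)}

theorem rigidityMap_eq_iff_frameworkEquiv :
    rigidityMap G q = rigidityMap G p ↔ FrameworkEquiv G p q := by
  simp only [funext_iff, rigidityMap, sq_eq_sq₀ (norm_nonneg _) (norm_nonneg _)]
  exact ⟨fun h i j hij => h ⟨(i, j), hij⟩, fun h e => h _ _ e.adj⟩

theorem frameworkEquiv_top_iff_frameworkCongruent :
    FrameworkEquiv ⊤ p q ↔ FrameworkCongruent p q := by
  refine ⟨fun h i j => ?_, fun h i j _ => h i j⟩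
  obtain rfl | hij := eq_or_ne i j
  · simp only [sub_self]
  · exact h i j hij

theorem locallyRigid_iff_locallyDetermines :
    LocallyRigid G p ↔ LocallyDetermines (rigidityMap G) (rigidityMap ⊤) p := by
  simp only [LocallyDetermines, rigidityMap_eq_iff_frameworkEquiv,
    frameworkEquiv_top_iff_frameworkCongruent, Metric.nhds_basis_closedBall.eventually_iff]
  refine exists_congr fun ε => and_congr_right fun hε => forall_congr' fun q => ?_
  rw [Metric.mem_closedBall', dist_pi_le_iff (le_of_lt hε)]
  simp only [dist_eq_norm]

end Frameworks

/-- Generic dichotomy for local rigidity: outside a Lebesgue-null set of configurations,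
either every framework on `G` is locally rigid, or none is. -/
theorem generic_local_rigidity_dichotomy (n d : ℕ) (hd : 0 < d)
    (G : SimpleGraph (Fin n)) :
    ∃ N : Set (Fin n → EuclideanSpace ℝ (Fin d)), volume N = 0 ∧
      ((∀ p ∉ N, LocallyRigid G p) ∨ (∀ p ∉ N, ¬ LocallyRigid G p)) := by
  classical
  simp only [locallyRigid_iff_locallyDetermines]
  rcases ae_locallyDetermines_or_ae_not_locallyDetermines volume (contDiff_rigidityMap G)
    (contDiff_rigidityMap (E := EuclideanSpace ℝ (Fin d)) ⊤) with hrigid | hflexible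
  · exact ⟨_, ae_iff.1 hrigid, .inl fun p hp => not_not.1 hp⟩
  · exact ⟨_, ae_iff.1 hflexible, .inr fun p hp => not_not.1 hp⟩
end
end
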